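/- arXiv:0804.3579 — 11 statements merged into one kernel-verified Lean document; each statement's English description precedes it below -/
import Mathlib

section
/- Let G be a group (written multiplicatively), let k ≥ 1 and 1 ≤ m ≤ k be integers, and for each n ∈ ℕ let f_n : G^{k+1} → G and g_n : G^m → G, and let h : G^{k+1-m} → G. Assume the semiconjugate functional equation holds: for every n ∈ ℕ and all u_0, …, u_k ∈ G, f_n(u_0,…,u_k) * h(u_0,…,u_{k-m}) = g_n(u_0 * h(u_1,…,u_{k+1-m}), u_1 * h(u_2,…,u_{k+2-m}), …, u_{m-1} * h(u_m,…,u_k)). If a sequence (x_n)_{n ≥ -k} in G satisfies x_{n+1} = f_n(x_n, x_{n-1}, …, x_{n-k}) for all n ≥ 0, then the sequence t_n := x_n * h(x_{n-1}, x_{n-2}, …, x_{n-(k+1-m)}) (defined for n ≥ -(m-1)) satisfies, for all n ≥ 0, the factor equation t_{n+1} = g_n(t_n, t_{n-1}, …, t_{n-m+1}) and the cofactor equation x_{n+1} = t_{n+1} * h(x_n, x_{n-1}, …, x_{n-(k-m)})^{-1}. -/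
/-- Semiconjugate factorization (Theorem 1, forward direction): if the semiconjugate
functional equation holds, then every solution `x` of the order `k+1` equation gives,
via `t_n = x_n * h(x_{n-1},…,x_{n-(k+1-m)})`, a solution of the factor equation of
order `m` together with the cofactor equation of order `k+1-m`. -/
theorem stmt_0 {G : Type*} [Group G] (k m : ℕ) (hk : 1 ≤ k) (hm : 1 ≤ m) (hmk : m ≤ k)
    (f : ℕ → (Fin (k + 1) → G) → G) (g : ℕ → (Fin m → G) → G)
    (h : (Fin (k + 1 - m) → G) → G)
    (hsc : ∀ (n : ℕ) (u : Fin (k + 1) → G),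
      f n u * h (fun i => u ⟨i.val, by have := i.isLt; omega⟩) =
        g n (fun j => u ⟨j.val, by have := j.isLt; omega⟩ *
          h (fun i => u ⟨j.val + 1 + i.val, by have := i.isLt; have := j.isLt; omega⟩)))
    (x : ℤ → G)
    (hx : ∀ n : ℕ, x ((n : ℤ) + 1) = f n (fun i => x ((n : ℤ) - i.val)))
    (t : ℤ → G)
    (ht : ∀ n : ℤ, -(m : ℤ) + 1 ≤ n → t n = x n * h (fun i => x (n - 1 - i.val))) :
    ∀ n : ℕ,
      t ((n : ℤ) + 1) = g n (fun j => t ((n : ℤ) - j.val)) ∧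
      x ((n : ℤ) + 1) = t ((n : ℤ) + 1) * (h (fun i => x ((n : ℤ) - i.val)))⁻¹ := by
  intro n
  have h1 : t ((n : ℤ) + 1) = x ((n : ℤ) + 1) * h (fun i => x ((n : ℤ) - i.val)) := by
    rw [ht _ (by omega)]
    simp only [add_sub_cancel_right]
  refine ⟨?_, by rw [h1, mul_inv_cancel_right]⟩
  rw [h1, hx n]
  refine (hsc n (fun i => x ((n : ℤ) - i.val))).trans ?_
  congr 1
  funext j
  have hj := j.isLt
  rw [ht _ (by omega)]
  congr 2
  funext i
  congr 1
  push_cast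
  ring
end

section
/- Let G be a group (written multiplicatively), let k ≥ 1 and 1 ≤ m ≤ k be integers, and for each n ∈ ℕ let f_n : G^{k+1} → G and g_n : G^m → G, and let h : G^{k+1-m} → G. Assume the semiconjugate functional equation holds: for every n ∈ ℕ and all u_0, …, u_k ∈ G, f_n(u_0,…,u_k) * h(u_0,…,u_{k-m}) = g_n(u_0 * h(u_1,…,u_{k+1-m}), u_1 * h(u_2,…,u_{k+2-m}), …, u_{m-1} * h(u_m,…,u_k)). Suppose (t_n)_{n ≥ -(m-1)} is a sequence in G satisfying t_{n+1} = g_n(t_n, …, t_{n-m+1}) for all n ≥ 0, and (x_n)_{n ≥ -k} is a sequence in G satisfying x_{n+1} = t_{n+1} * h(x_n, …, x_{n-(k-m)})^{-1} for all n ≥ 0 together with the initial consistency conditions t_{-j} = x_{-j} * h(x_{-j-1}, …, x_{-j-(k+1-m)}) for j = 0, 1, …, m-1. Then (x_n) is a solution of the original equation: x_{n+1} = f_n(x_n, x_{n-1}, …, x_{n-k}) for all n ≥ 0. -/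
/-- Semiconjugate factorization (Theorem 1, converse direction): if `t` solves the
factor equation, `x` solves the cofactor equation, and the initial consistency
conditions `t_{-j} = x_{-j} * h(x_{-j-1},…,x_{-j-(k+1-m)})` hold for `j = 0,…,m-1`,
then `x` is a solution of the original equation of order `k+1`. -/
theorem stmt_1 {G : Type*} [Group G] (k m : ℕ) (hk : 1 ≤ k) (hm : 1 ≤ m) (hmk : m ≤ k)
    (f : ℕ → (Fin (k + 1) → G) → G) (g : ℕ → (Fin m → G) → G)
    (h : (Fin (k + 1 - m) → G) → G)
    (hsc : ∀ (n : ℕ) (u : Fin (k + 1) → G),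
      f n u * h (fun i => u ⟨i.val, by have := i.isLt; omega⟩) =
        g n (fun j => u ⟨j.val, by have := j.isLt; omega⟩ *
          h (fun i => u ⟨j.val + 1 + i.val, by have := i.isLt; have := j.isLt; omega⟩)))
    (t : ℤ → G) (x : ℤ → G)
    (hfac : ∀ n : ℕ, t ((n : ℤ) + 1) = g n (fun j => t ((n : ℤ) - j.val)))
    (hcofac : ∀ n : ℕ,
      x ((n : ℤ) + 1) = t ((n : ℤ) + 1) * (h (fun i => x ((n : ℤ) - i.val)))⁻¹)
    (hinit : ∀ j : Fin m,
      t (-(j.val : ℤ)) = x (-(j.val : ℤ)) * h (fun i => x (-(j.val : ℤ) - 1 - i.val))) :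
    ∀ n : ℕ, x ((n : ℤ) + 1) = f n (fun i => x ((n : ℤ) - i.val)) := by
  have key : ∀ z : ℤ, -(m : ℤ) < z → t z = x z * h (fun i => x (z - 1 - i.val)) := by
    intro z hz
    rcases le_or_gt z 0 with h0 | h0
    · obtain ⟨j, hj⟩ : ∃ j : ℕ, z = -(j : ℤ) := ⟨z.natAbs, by omega⟩
      subst hj
      exact hinit ⟨j, by omega⟩
    · obtain ⟨n, hn⟩ : ∃ n : ℕ, z = (n : ℤ) + 1 := ⟨(z - 1).toNat, by omega⟩
      subst hn
      rw [hcofac n]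
      simp
  intro n
  rw [hcofac n, mul_inv_eq_iff_eq_mul, hfac n]
  have h1 := hsc n (fun i => x ((n : ℤ) - i.val))
  refine Eq.trans ?_ h1.symm
  congr 1
  funext j
  have hj := j.isLt
  rw [key _ (by omega)]
  congr 2
  funext i
  congr 1
  push_cast
  ring
end

section
/- Let G be a group (written multiplicatively), let k ≥ 1, and let f : G^{k+1} → G and g : G^k → G be functions such that for all u_0, …, u_k ∈ G, f(u_0,…,u_k) * u_0^{-1} = g(u_0 * u_1^{-1}, u_1 * u_2^{-1}, …, u_{k-1} * u_k^{-1}). Then f is homogeneous of degree 1 relative to G: for all t, u_0, …, u_k ∈ G, f(u_0 * t, u_1 * t, …, u_k * t) = f(u_0, …, u_k) * t. -/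
/-- Theorem 2 (one direction): if `f` satisfies the inversion-based form symmetry
relation `f(u_0,…,u_k) * u_0⁻¹ = g(u_0 * u_1⁻¹, …, u_{k-1} * u_k⁻¹)` for some `g`,
then `f` is homogeneous of degree 1 relative to the group `G`. -/
theorem stmt_3 {G : Type*} [Group G] (k : ℕ) (hk : 1 ≤ k)
    (f : (Fin (k + 1) → G) → G) (g : (Fin k → G) → G)
    (hsc : ∀ u : Fin (k + 1) → G,
      f u * (u 0)⁻¹ = g (fun j => u ⟨j.val, by have := j.isLt; omega⟩ *
        (u ⟨j.val + 1, by have := j.isLt; omega⟩)⁻¹)) :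
    ∀ (t : G) (u : Fin (k + 1) → G), f (fun i => u i * t) = f u * t := by
  intro t u
  have h1 := hsc (fun i => u i * t)
  have h2 := hsc u
  have h3 : f (fun i => u i * t) * (u 0 * t)⁻¹ = f u * (u 0)⁻¹ := by
    rw [h2]
    refine h1.trans (congrArg g ?_)
    funext j
    group
  rw [mul_inv_eq_iff_eq_mul] at h3
  rw [h3]
  group
end

section
/- Let G be a group (written multiplicatively), let k ≥ 1, and for each n ∈ ℕ let f_n : G^{k+1} → G be homogeneous of degree 1 relative to G, i.e., f_n(u_0 * t, …, u_k * t) = f_n(u_0,…,u_k) * t for all t, u_0,…,u_k ∈ G. If a sequence (x_n)_{n ≥ -k} in G satisfies x_{n+1} = f_n(x_n, …, x_{n-k}) for all n ≥ 0, then the sequence t_n := x_n * x_{n-1}^{-1} (defined for n ≥ -k+1) satisfies, for all n ≥ 0, the factor equation of order k: t_{n+1} = f_n(1, t_n^{-1}, (t_n * t_{n-1})^{-1}, …, (t_n * t_{n-1} * ⋯ * t_{n-k+1})^{-1}), where 1 is the identity of G, and the cofactor equation x_{n+1} = t_{n+1} * x_n. -/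
/-- Theorem 2 (SC factorization of HD1 equations): if each `f_n` is homogeneous of
degree 1 relative to `G` and `x` solves `x_{n+1} = f_n(x_n,…,x_{n-k})`, then
`t_n = x_n * x_{n-1}⁻¹` solves the order-`k` factor equation
`t_{n+1} = f_n(1, t_n⁻¹, (t_n t_{n-1})⁻¹, …, (t_n ⋯ t_{n-k+1})⁻¹)`, together with the
cofactor equation `x_{n+1} = t_{n+1} * x_n`. -/
theorem stmt_4 {G : Type*} [Group G] (k : ℕ) (hk : 1 ≤ k)
    (f : ℕ → (Fin (k + 1) → G) → G)
    (hHD1 : ∀ (n : ℕ) (t : G) (u : Fin (k + 1) → G), f n (fun i => u i * t) = f n u * t)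
    (x : ℤ → G)
    (hx : ∀ n : ℕ, x ((n : ℤ) + 1) = f n (fun i => x ((n : ℤ) - i.val)))
    (t : ℤ → G)
    (ht : ∀ n : ℤ, -(k : ℤ) + 1 ≤ n → t n = x n * (x (n - 1))⁻¹) :
    ∀ n : ℕ,
      t ((n : ℤ) + 1) =
        f n (fun i => (((List.range i.val).map fun j => t ((n : ℤ) - j)).prod)⁻¹) ∧
      x ((n : ℤ) + 1) = t ((n : ℤ) + 1) * x (n : ℤ) := by
  intro n
  have key : ∀ m : ℕ, m ≤ k →
      ((List.range m).map fun j : ℕ => t ((n : ℤ) - j)).prod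
        = x (n : ℤ) * (x ((n : ℤ) - m))⁻¹ := by
    intro m
    induction m with
    | zero => intro _; simp
    | succ m ih =>
      intro hm
      rw [List.range_succ, List.map_append, List.prod_append, ih (by omega)]
      have e : (n : ℤ) - m - 1 = (n : ℤ) - ((m + 1 : ℕ) : ℤ) := by push_cast; ring
      simp only [List.map_cons, List.map_nil, List.prod_cons, List.prod_nil, mul_one]
      rw [ht ((n : ℤ) - m) (by omega), e]
      group
  have h1 : t ((n : ℤ) + 1) = x ((n : ℤ) + 1) * (x (n : ℤ))⁻¹ := by
    rw [ht _ (by omega), add_sub_cancel_right]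
  refine ⟨?_, ?_⟩
  · rw [h1, hx n, ← hHD1]
    congr 1
    funext i
    have hl : ∀ l : List ℕ, (l >>= fun a => pure (a : ℤ)) = l.map (fun a : ℕ => (a : ℤ)) := by
      intro l
      induction l with
      | nil => rfl
      | cons a l ih => simpa using ih
    rw [hl, List.map_map]
    change _ = (((List.range i.val).map fun j : ℕ => t ((n : ℤ) - j)).prod)⁻¹
    rw [key i.val (by have := i.isLt; omega)]
    group
  · rw [h1]; group
end

section
/- Let k ≥ 1, let φ_0, φ_1, …, φ_k : ℂ → ℂ be functions, let (α_n)_{n ≥ 0} be a sequence of complex numbers, and suppose there is a constant c ∈ ℂ such that for all z ∈ ℂ, c^{k+1} z - c^k φ_0(z) - c^{k-1} φ_1(z) - ⋯ - c φ_{k-1}(z) - φ_k(z) = 0. Define h_j(z) = c^j z - c^{j-1} φ_0(z) - c^{j-2} φ_1(z) - ⋯ - φ_{j-1}(z) for j = 1, …, k. If a sequence (x_n)_{n ≥ -k} of complex numbers satisfies the separable equation x_{n+1} = α_n + φ_0(x_n) + φ_1(x_{n-1}) + ⋯ + φ_k(x_{n-k}) for all n ≥ 0, then the sequence z_n := x_n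 + h_1(x_{n-1}) + h_2(x_{n-2}) + ⋯ + h_k(x_{n-k}) satisfies, for all n ≥ 0, the first-order linear factor equation z_{n+1} = α_n + c z_n and the order-k cofactor equation x_{n+1} = z_{n+1} - h_1(x_n) - h_2(x_{n-1}) - ⋯ - h_k(x_{n-k+1}). -/
/-- Theorem 3: the separable equation `x_{n+1} = α_n + φ_0(x_n) + ⋯ + φ_k(x_{n-k})`
over ℂ, under the linear-combination condition
`c^{k+1} z - c^k φ_0(z) - ⋯ - φ_k(z) = 0`, has the type-(1,k) SC factorization
`z_{n+1} = α_n + c z_n`, `x_{n+1} = z_{n+1} - h_1(x_n) - ⋯ - h_k(x_{n-k+1})`,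
where `z_n = x_n + h_1(x_{n-1}) + ⋯ + h_k(x_{n-k})` and
`h_j(z) = c^j z - c^{j-1} φ_0(z) - ⋯ - φ_{j-1}(z)`. -/
theorem stmt_6 (k : ℕ) (hk : 1 ≤ k) (φ : ℕ → ℂ → ℂ) (α : ℕ → ℂ) (c : ℂ)
    (hc : ∀ w : ℂ, c ^ (k + 1) * w - ∑ j ∈ Finset.range (k + 1), c ^ (k - j) * φ j w = 0)
    (h : ℕ → ℂ → ℂ)
    (hdef : ∀ j, 1 ≤ j → j ≤ k → ∀ w : ℂ,
      h j w = c ^ j * w - ∑ i ∈ Finset.range j, c ^ (j - 1 - i) * φ i w)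
    (x : ℤ → ℂ)
    (hx : ∀ n : ℕ, x ((n : ℤ) + 1) = α n + ∑ j ∈ Finset.range (k + 1), φ j (x ((n : ℤ) - j)))
    (z : ℤ → ℂ)
    (hz : ∀ n : ℤ, 0 ≤ n → z n = x n + ∑ j ∈ Finset.Icc 1 k, h j (x (n - j))) :
    ∀ n : ℕ,
      z ((n : ℤ) + 1) = α n + c * z (n : ℤ) ∧
      x ((n : ℤ) + 1) = z ((n : ℤ) + 1) - ∑ j ∈ Finset.Icc 1 k, h j (x ((n : ℤ) + 1 - j)) := by
  obtain ⟨H, hH⟩ : ∃ H : ℕ → ℂ → ℂ, ∀ j w,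
      H j w = c ^ j * w - ∑ i ∈ Finset.range j, c ^ (j - 1 - i) * φ i w := ⟨_, fun _ _ => rfl⟩
  have H0 : ∀ w, H 0 w = w := by intro w; simp [hH]
  have Hs : ∀ j w, H (j + 1) w = c * H j w - φ j w := by
    intro j w
    have e : ∑ i ∈ Finset.range j, c ^ (j + 1 - 1 - i) * φ i w
        = c * ∑ i ∈ Finset.range j, c ^ (j - 1 - i) * φ i w := by
      rw [Finset.mul_sum]
      refine Finset.sum_congr rfl fun i hi => ?_
      have hi' := Finset.mem_range.1 hi
      have : j + 1 - 1 - i = (j - 1 - i) + 1 := by omega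
      rw [this, pow_succ]
      ring
    rw [hH, hH, Finset.sum_range_succ, e]
    simp only [Nat.add_sub_cancel, Nat.sub_self]
    ring
  have Hk : ∀ w, H (k + 1) w = 0 := by
    intro w
    rw [hH]
    simpa using hc w
  have hS : ∀ m : ℤ, ∑ j ∈ Finset.Icc 1 k, h j (x (m - j))
      = ∑ j ∈ Finset.range k, H (j + 1) (x (m - 1 - j)) := by
    intro m
    rw [Finset.range_eq_Ico, ← Finset.Ico_add_one_right_eq_Icc,
      Finset.sum_Ico_eq_sum_range, ← Finset.range_eq_Ico]
    refine Finset.sum_congr (by simp) fun j hj => ?_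
    have hj' := Finset.mem_range.1 hj
    rw [hdef (1 + j) (by omega) (by omega), hH, add_comm 1 j]
    have : m - ((j + 1 : ℕ) : ℤ) = m - 1 - j := by push_cast; ring
    rw [this]
  intro n
  have hz1 := hz ((n : ℤ) + 1) (by positivity)
  refine ⟨?_, by rw [hz1]; ring⟩
  have hz0 : z n = ∑ j ∈ Finset.range (k + 1), H j (x ((n : ℤ) - j)) := by
    rw [hz n (by positivity), hS, Finset.sum_range_succ', H0, add_comm]
    congr 1
    · refine Finset.sum_congr rfl fun j _ => ?_
      congr 2
      push_cast
      ring
  have hT : ∑ j ∈ Finset.range k, H (j + 1) (x ((n : ℤ) + 1 - 1 - j))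
      = ∑ j ∈ Finset.range (k + 1), H (j + 1) (x ((n : ℤ) - j)) := by
    rw [Finset.sum_range_succ, Hk, add_zero]
    simp
  rw [hz1, hS, hT, hx, hz0]
  simp only [Hs, Finset.sum_sub_distrib, Finset.mul_sum]
  ring
end

section
/- Let k ≥ 0, let b_0, …, b_k ∈ ℂ, let (α_n)_{n ≥ 0} be a sequence of complex numbers, and let c_0, c_1, …, c_k ∈ ℂ be such that the polynomial identity z^{k+1} + b_0 z^k + b_1 z^{k-1} + ⋯ + b_{k-1} z + b_k = (z - c_0)(z - c_1)⋯(z - c_k) holds (i.e., c_0, …, c_k are the eigenvalues, listed with multiplicity). Suppose sequences z_{0,n}, z_{1,n}, …, z_{k,n} of complex numbers satisfy the triangular system: for all n ≥ 0, z_{0,n+1} = α_n + c_0 z_{0,n} and z_{j,n+1} = z_{j-1,n+1} + c_j z_{j,n} for j = 1, …, k. Then the sequence x_n := z_{k,n} satisfies the linear non-homogeneous equation of order k+1: for all n ≥ 0, x_{n+k+1} + b_0 x_{n+k} + b_1 x_{n+k-1} + ⋯ + b_k x_n = α_{n+k}. -/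
theorem shift_pow_aux (m : ℕ) (x : ℕ → ℂ) (n : ℕ) :
    ((LinearMap.funLeft ℂ ℂ Nat.succ) ^ m) x n = x (n + m) := by
  induction m generalizing n with
  | zero => simp
  | succ m ih =>
    rw [pow_succ', Module.End.mul_apply, LinearMap.funLeft_apply, ih]
    congr 1
    omega

/-- Corollary 1 (one direction): any solution of the triangular system of `k+1`
first-order linear non-homogeneous equations, whose coefficients `c_0,…,c_k` are the
eigenvalues (roots of the characteristic polynomial listed with multiplicity), yields
via `x_n = z_{k,n}` a solution of the linear non-homogeneous equation of order `k+1`. -/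
theorem stmt_7 (k : ℕ) (b : ℕ → ℂ) (α : ℕ → ℂ) (c : ℕ → ℂ)
    (hpoly : ∀ w : ℂ, w ^ (k + 1) + ∑ j ∈ Finset.range (k + 1), b j * w ^ (k - j) =
      ∏ j ∈ Finset.range (k + 1), (w - c j))
    (z : ℕ → ℕ → ℂ)
    (h0 : ∀ n : ℕ, z 0 (n + 1) = α n + c 0 * z 0 n)
    (hj : ∀ n : ℕ, ∀ j, 1 ≤ j → j ≤ k → z j (n + 1) = z (j - 1) (n + 1) + c j * z j n) :
    ∀ n : ℕ,
      z k (n + k + 1) + ∑ j ∈ Finset.range (k + 1), b j * z k (n + k - j) = α (n + k) := by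
  set E : Module.End ℂ (ℕ → ℂ) := LinearMap.funLeft ℂ ℂ Nat.succ with hE
  have key : ∀ m, m ≤ k → ∀ n, (Polynomial.aeval E
      (∏ j ∈ Finset.range (m + 1), (Polynomial.X - Polynomial.C (c j)))) (z m) n
        = α (n + m) := by
    intro m
    induction m with
    | zero =>
      intro _ n
      simp [hE, LinearMap.funLeft_apply, h0, Module.algebraMap_end_apply]
    | succ m ih =>
      intro hm n
      have h1 : (Polynomial.aeval E (Polynomial.X - Polynomial.C (c (m + 1)))) (z (m + 1))
          = (Polynomial.aeval E (Polynomial.X : Polynomial ℂ)) (z m) := by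
        funext i
        simp [hE, LinearMap.funLeft_apply, hj i (m + 1) (by omega) hm,
          Module.algebraMap_end_apply]
      rw [Finset.prod_range_succ, map_mul, Module.End.mul_apply, h1, ← Module.End.mul_apply,
        ← map_mul, mul_comm, map_mul, Module.End.mul_apply, Polynomial.aeval_X]
      rw [hE, LinearMap.funLeft_apply, ← hE, ih (by omega)]
      congr 1
      omega
  have hP : (Polynomial.X ^ (k + 1) + ∑ j ∈ Finset.range (k + 1),
      Polynomial.C (b j) * Polynomial.X ^ (k - j) : Polynomial ℂ)
      = ∏ j ∈ Finset.range (k + 1), (Polynomial.X - Polynomial.C (c j)) := by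
    apply Polynomial.funext
    intro w
    simpa [Polynomial.eval_finsetSum, Polynomial.eval_prod] using hpoly w
  intro n
  rw [← key k le_rfl n, ← hP]
  simp only [map_add, map_sum, map_mul, map_pow, Polynomial.aeval_X, Polynomial.aeval_C,
    LinearMap.add_apply, LinearMap.sum_apply, Pi.add_apply, Finset.sum_apply,
    Module.End.mul_apply, Module.algebraMap_end_apply, Pi.smul_apply, smul_eq_mul]
  rw [hE, shift_pow_aux]
  congr 1
  apply Finset.sum_congr rfl
  intro j hjm
  have := Finset.mem_range.mp hjm
  rw [shift_pow_aux, Nat.add_sub_assoc (by omega)]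
end

section
/- Let k ≥ 1, let ψ_0, ψ_1, …, ψ_k : (0,∞) → (0,∞) be functions, let (β_n)_{n ≥ 0} be a sequence of positive real numbers, and suppose there is c ∈ ℝ such that for all t > 0, ψ_0(t)^{c^k} · ψ_1(t)^{c^{k-1}} ⋯ ψ_{k-1}(t)^{c} · ψ_k(t) = t^{c^{k+1}} (real powers). Define h_j(t) := t^{c^j} · ∏_{i=0}^{j-1} ψ_i(t)^{-c^{j-1-i}} for j = 1, …, k and t > 0. If a sequence (y_n)_{n ≥ -k} of positive real numbers satisfies the multiplicative separable equation y_{n+1} = β_n ψ_0(y_n) ψ_1(y_{n-1}) ⋯ ψ_k(y_{n-k}) for all n ≥ 0, then the sequence r_n := y_n · h_1(y_{n-1}) · h_2(y_{n-2}) ⋯ h_k(y_{n-k}) satisfies, for all n ≥ 0, the first-order factor equation r_{n+1} = β_n r_n^c and the order-k cofactor equation y_{n+1} = r_{n+1} / (h_1(y_n) h_2(y_{n-1}) ⋯ h_k(y_{n-k+1})). -/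
/-- Corollary 2: the multiplicative separable equation
`y_{n+1} = β_n ψ_0(y_n) ⋯ ψ_k(y_{n-k})` on `(0,∞)`, under the condition
`ψ_0(t)^{c^k} ⋯ ψ_k(t) = t^{c^{k+1}}`, has the type-(1,k) SC factorization
`r_{n+1} = β_n r_n^c`, `y_{n+1} = r_{n+1}/(h_1(y_n) ⋯ h_k(y_{n-k+1}))`, where
`r_n = y_n h_1(y_{n-1}) ⋯ h_k(y_{n-k})` and
`h_j(t) = t^{c^j} ∏_{i<j} ψ_i(t)^{-c^{j-1-i}}` (real powers). -/
theorem stmt_10 (k : ℕ) (hk : 1 ≤ k) (ψ : ℕ → ℝ → ℝ)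
    (hψ : ∀ j ≤ k, ∀ t : ℝ, 0 < t → 0 < ψ j t)
    (β : ℕ → ℝ) (hβ : ∀ n, 0 < β n) (c : ℝ)
    (hc : ∀ t : ℝ, 0 < t →
      ∏ j ∈ Finset.range (k + 1), (ψ j t) ^ (c ^ (k - j)) = t ^ (c ^ (k + 1)))
    (h : ℕ → ℝ → ℝ)
    (hdef : ∀ j, 1 ≤ j → j ≤ k → ∀ t : ℝ, 0 < t →
      h j t = t ^ (c ^ j) * ∏ i ∈ Finset.range j, (ψ i t) ^ (-(c ^ (j - 1 - i))))
    (y : ℤ → ℝ) (hypos : ∀ n : ℤ, -(k : ℤ) ≤ n → 0 < y n)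
    (hy : ∀ n : ℕ, y ((n : ℤ) + 1) = β n * ∏ j ∈ Finset.range (k + 1), ψ j (y ((n : ℤ) - j)))
    (r : ℤ → ℝ)
    (hr : ∀ n : ℤ, 0 ≤ n → r n = y n * ∏ j ∈ Finset.Icc 1 k, h j (y (n - j))) :
    ∀ n : ℕ,
      r ((n : ℤ) + 1) = β n * (r (n : ℤ)) ^ c ∧
      y ((n : ℤ) + 1) = r ((n : ℤ) + 1) / ∏ j ∈ Finset.Icc 1 k, h j (y ((n : ℤ) + 1 - j)) := by
  set H : ℕ → ℝ → ℝ := fun j t =>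
    t ^ (c ^ j) * ∏ i ∈ Finset.range j, (ψ i t) ^ (-(c ^ (j - 1 - i))) with hH
  have Hpos : ∀ j ≤ k + 1, ∀ t : ℝ, 0 < t → 0 < H j t := by
    intro j hj t ht
    refine mul_pos (Real.rpow_pos_of_pos ht _) (Finset.prod_pos fun i hi => ?_)
    have := Finset.mem_range.1 hi
    exact Real.rpow_pos_of_pos (hψ i (by omega) t ht) _
  have H0 : ∀ t, H 0 t = t := by intro t; simp [hH]
  have Hlast : ∀ t, 0 < t → H (k + 1) t = 1 := by
    intro t ht
    have e : ∏ i ∈ Finset.range (k + 1), (ψ i t) ^ (-(c ^ (k + 1 - 1 - i)))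
        = (t ^ (c ^ (k + 1)))⁻¹ := by
      rw [← hc t ht, ← Finset.prod_inv_distrib]
      refine Finset.prod_congr rfl fun i hi => ?_
      have := Finset.mem_range.1 hi
      rw [Real.rpow_neg (hψ i (by omega) t ht).le, Nat.add_sub_cancel]
    simp only [hH]
    rw [e]
    exact mul_inv_cancel₀ (Real.rpow_pos_of_pos ht _).ne'
  have Hstep : ∀ j ≤ k, ∀ t, 0 < t → (H j t) ^ c = ψ j t * H (j + 1) t := by
    intro j hj t ht
    have hψj := hψ j hj t ht
    have hp : ∀ i ∈ Finset.range j, 0 ≤ (ψ i t) ^ (-(c ^ (j - 1 - i))) := by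
      intro i hi
      have := Finset.mem_range.1 hi
      exact (Real.rpow_pos_of_pos (hψ i (by omega) t ht) _).le
    simp only [hH]
    rw [Real.mul_rpow (Real.rpow_pos_of_pos ht _).le (Finset.prod_nonneg hp),
      ← Real.finsetProd_rpow _ _ hp, ← Real.rpow_mul ht.le, Finset.prod_range_succ]
    have e : ∏ i ∈ Finset.range j, ((ψ i t) ^ (-(c ^ (j - 1 - i)))) ^ c
        = ∏ i ∈ Finset.range j, (ψ i t) ^ (-(c ^ (j + 1 - 1 - i))) := by
      refine Finset.prod_congr rfl fun i hi => ?_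
      have := Finset.mem_range.1 hi
      rw [← Real.rpow_mul (hψ i (by omega) t ht).le]
      have e2 : j + 1 - 1 - i = (j - 1 - i) + 1 := by omega
      rw [e2, pow_succ, neg_mul]
    rw [e, pow_succ]
    simp only [Nat.add_sub_cancel, Nat.sub_self, pow_zero, Real.rpow_neg_one]
    field_simp
  have hprod : ∀ n : ℤ, 0 ≤ n → ∏ j ∈ Finset.Icc 1 k, h j (y (n - j))
      = ∏ j ∈ Finset.range k, H (j + 1) (y (n - 1 - j)) := by
    intro n hn
    rw [← Finset.Ico_succ_right_eq_Icc, Finset.prod_Ico_eq_prod_range]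
    refine Finset.prod_congr (by simp) fun j hj => ?_
    have hj' : j < k := by simpa using hj
    rw [hdef (1 + j) (by omega) (by omega) _ (hypos _ (by push_cast; omega))]
    have e : n - ((1 + j : ℕ) : ℤ) = n - 1 - j := by push_cast; ring
    rw [e, add_comm 1 j]
  clear_value H
  intro n
  have hP : ∀ j ∈ Finset.range (k + 1), 0 < y ((n : ℤ) - j) := by
    intro j hj
    have := Finset.mem_range.1 hj
    exact hypos _ (by omega)
  have hrn : r n = ∏ j ∈ Finset.range (k + 1), H j (y ((n : ℤ) - j)) := by
    rw [hr n (by omega), hprod n (by omega), Finset.prod_range_succ', mul_comm, H0]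
    congr 1
    · refine Finset.prod_congr rfl fun j _ => ?_
      congr 2
      push_cast; ring
  have hprod1 := hprod ((n : ℤ) + 1) (by omega)
  have hr1 := hr ((n : ℤ) + 1) (by omega)
  constructor
  · rw [hr1, hprod1, hrn, ← Real.finsetProd_rpow _ _ (fun j hj => (Hpos j
      (Finset.mem_range.1 hj).le _ (hP j hj)).le), hy n, mul_assoc]
    congr 1
    rw [Finset.prod_congr rfl (fun j hj => Hstep j
      (Nat.lt_succ_iff.1 (Finset.mem_range.1 hj)) _ (hP j hj)), Finset.prod_mul_distrib]
    congr 1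
    rw [Finset.prod_range_succ, Hlast _ (hP k (by simp)), mul_one, add_sub_cancel_right]
  · rw [hr1, mul_div_cancel_right₀]
    rw [hprod1]
    refine (Finset.prod_pos fun j hj => ?_).ne'
    have := Finset.mem_range.1 hj
    exact Hpos _ (by omega) _ (hypos _ (by omega))
end

section
/- Let k ≥ 1, let (a_n)_{n ≥ 0} and (b_n)_{n ≥ 0} be sequences of positive real numbers with lim_{n→∞} a_n = a > 0 and lim_{n→∞} b_n = b ≥ 0, and assume a + b ≠ 1. Let (x_n)_{n ≥ -k} be any sequence of positive real numbers satisfying x_{n+1} = x_n (a_n x_{n-k+1} / x_{n-k} + b_n) for all n ≥ 0. Then: if a + b < 1, lim_{n→∞} x_n = 0; and if a + b > 1, lim_{n→∞} x_n = ∞. -/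
open Filter in
theorem aux_decay (k : ℕ) (hk : 1 ≤ k) (u : ℕ → ℝ) (α : ℝ) (h0 : 0 ≤ α) (h1 : α < 1)
    (hu : ∀ᶠ n in atTop, u (n + k) ≤ α * u n) (ε : ℝ) (hε : 0 < ε) :
    ∀ᶠ n in atTop, u n ≤ ε := by
  obtain ⟨N, hN⟩ := eventually_atTop.1 hu
  have hj : ∀ r j : ℕ, u (N + r + j * k) ≤ α ^ j * u (N + r) := by
    intro r j
    induction j with
    | zero => simp
    | succ j ih =>
      have h := hN (N + r + j * k) (by omega)
      have e : N + r + (j + 1) * k = N + r + j * k + k := by ring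
      rw [e, pow_succ']
      have := mul_le_mul_of_nonneg_left ih h0
      linarith
  set C : ℝ := ∑ r ∈ Finset.range k, |u (N + r)| with hC
  have hlim : Tendsto (fun j : ℕ => α ^ j * C) atTop (nhds (0 * C)) :=
    (tendsto_pow_atTop_nhds_zero_of_lt_one h0 h1).mul_const C
  rw [zero_mul] at hlim
  obtain ⟨J, hJ⟩ := eventually_atTop.1 (hlim.eventually (gt_mem_nhds hε))
  refine eventually_atTop.2 ⟨N + J * k, fun n hn => ?_⟩
  have hdm := Nat.mod_add_div (n - N) k
  have hr : (n - N) % k < k := Nat.mod_lt _ hk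
  have hjJ : J ≤ (n - N) / k := (Nat.le_div_iff_mul_le hk).2 (by omega)
  have e : n = N + (n - N) % k + (n - N) / k * k := by
    rw [mul_comm ((n - N) / k) k]; omega
  have h2 := hj ((n - N) % k) ((n - N) / k)
  rw [← e] at h2
  have h3 : |u (N + (n - N) % k)| ≤ C :=
    Finset.single_le_sum (f := fun r => |u (N + r)|) (fun i _ => abs_nonneg _)
      (Finset.mem_range.2 hr)
  have h4 := mul_le_mul_of_nonneg_left ((le_abs_self _).trans h3) (pow_nonneg h0 ((n - N) / k))
  linarith [hJ _ hjJ]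

open Filter in
theorem aux_int {l : Filter ℝ} (x : ℤ → ℝ) (h : Tendsto (fun n : ℕ => x n) atTop l) :
    Tendsto x atTop l := by
  have ht : Tendsto Int.toNat atTop atTop :=
    tendsto_atTop_atTop.2 fun b => ⟨b, fun a ha => by omega⟩
  refine (h.comp ht).congr' ?_
  filter_upwards [eventually_ge_atTop 0] with n hn
  simp [Int.toNat_of_nonneg hn]

/-- Example 1 (asymptotics): for the rational delay equation
`x_{n+1} = x_n (a_n x_{n-k+1}/x_{n-k} + b_n)` with `a_n → a > 0`, `b_n → b ≥ 0` and
`a + b ≠ 1`, every positive solution converges to `0` if `a + b < 1` and to `∞` if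
`a + b > 1`. -/
theorem stmt_13 (k : ℕ) (hk : 1 ≤ k) (a b : ℕ → ℝ)
    (ha : ∀ n, 0 < a n) (hb : ∀ n, 0 < b n) (A B : ℝ)
    (hA : Filter.Tendsto a Filter.atTop (nhds A)) (hApos : 0 < A)
    (hB : Filter.Tendsto b Filter.atTop (nhds B)) (hBnn : 0 ≤ B)
    (hAB : A + B ≠ 1)
    (x : ℤ → ℝ) (hpos : ∀ n : ℤ, -(k : ℤ) ≤ n → 0 < x n)
    (hx : ∀ n : ℕ,
      x ((n : ℤ) + 1) = x (n : ℤ) * (a n * x ((n : ℤ) - k + 1) / x ((n : ℤ) - k) + b n)) :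
    (A + B < 1 → Filter.Tendsto x Filter.atTop (nhds 0)) ∧
    (A + B > 1 → Filter.Tendsto x Filter.atTop Filter.atTop) := by
  have hpN : ∀ n : ℕ, 0 < x n := fun n => hpos _ (by omega)
  set s : ℕ → ℝ := fun n => x ((n : ℤ) - k + 1) / x ((n : ℤ) - k) with hs
  have hspos : ∀ n, 0 < s n := fun n => div_pos (hpos _ (by omega)) (hpos _ (by omega))
  have hsx : ∀ n : ℕ, x ((n : ℤ) + 1) = s (n + k) * x n := by
    intro n
    have e : ((n + k : ℕ) : ℤ) - k = n := by push_cast; ring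
    simp only [hs, e]
    field_simp [(hpN n).ne']
  have hrec : ∀ n, s (n + k) = a n * s n + b n := by
    intro n
    have h1 := hx n
    rw [hsx n, mul_comm] at h1
    have h2 := mul_left_cancel₀ (hpN n).ne' h1
    rw [h2, mul_div_assoc]
  constructor
  · intro hlt
    obtain ⟨e, he⟩ : ∃ e, e = (1 - A - B) / 3 := ⟨_, rfl⟩
    have hα : A + e < 1 := by linarith
    have hL : (B + e) / (1 - (A + e)) < 1 := by
      rw [div_lt_one (by linarith)]; linarith
    have hLpos : 0 < (B + e) / (1 - (A + e)) := div_pos (by linarith) (by linarith)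
    have hLe : (B + e) / (1 - (A + e)) * (1 - (A + e)) = B + e :=
      div_mul_cancel₀ _ (by linarith)
    generalize (B + e) / (1 - (A + e)) = L at hL hLpos hLe
    have hev := aux_decay k hk (fun n => s n - L) (A + e) (by linarith) hα (by
      filter_upwards [hA.eventually (gt_mem_nhds (show A < A + e by linarith)),
        hB.eventually (gt_mem_nhds (show B < B + e by linarith))] with n h1 h2
      have := mul_le_mul_of_nonneg_right h1.le (hspos n).le
      rw [hrec]
      linarith) ((1 - L) / 2) (by linarith)
    obtain ⟨M, hM⟩ := Filter.eventually_atTop.1 hev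
    apply aux_int
    have hq : ∀ j : ℕ, x ((j + M : ℕ) : ℤ) ≤ ((1 + L) / 2) ^ j * x M := by
      intro j
      induction j with
      | zero => simp
      | succ j ih =>
        have e1 : ((j + 1 + M : ℕ) : ℤ) = ((j + M : ℕ) : ℤ) + 1 := by push_cast; ring
        have h1 := hM (j + M + k) (by omega)
        rw [e1, hsx, pow_succ', mul_assoc]
        exact mul_le_mul (by linarith) ih (hpN _).le (by linarith)
    rw [← Filter.tendsto_add_atTop_iff_nat M]
    have hlim := (tendsto_pow_atTop_nhds_zero_of_lt_one (r := (1 + L) / 2) (by linarith)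
      (by linarith)).mul_const (x M)
    rw [zero_mul] at hlim
    exact squeeze_zero (fun j => (hpN _).le) hq hlim
  · intro hgt
    have key : ∃ q : ℝ, 1 < q ∧ ∀ᶠ n in Filter.atTop, q ≤ s n := by
      rcases lt_or_ge 1 A with h1A | hA1
      · refine ⟨2, by norm_num, ?_⟩
        have hα : 1 < (1 + A) / 2 := by linarith
        have hev := aux_decay k hk (fun n => (s n)⁻¹) ((1 + A) / 2)⁻¹ (by positivity)
          (inv_lt_one_of_one_lt₀ hα) (by
          filter_upwards [hA.eventually (lt_mem_nhds (show (1 + A) / 2 < A by linarith))]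
            with n h1
          have := mul_le_mul_of_nonneg_right h1.le (hspos n).le
          rw [← mul_inv]
          apply inv_anti₀ (mul_pos (by linarith) (hspos n))
          rw [hrec]
          linarith [hb n]) (2⁻¹) (by norm_num)
        filter_upwards [hev] with n hn
        exact (inv_le_inv₀ (hspos n) (by norm_num)).1 hn
      · obtain ⟨e, he⟩ : ∃ e, e = min ((A + B - 1) / 3) (A / 2) := ⟨_, rfl⟩
        have he0 : 0 < e := by rw [he]; exact lt_min (by linarith) (by linarith)
        have he1 : e ≤ (A + B - 1) / 3 := he ▸ min_le_left _ _
        have he2 : e ≤ A / 2 := he ▸ min_le_right _ _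
        have hL : 1 < (B - e) / (1 - (A - e)) := by
          rw [one_lt_div (by linarith)]; linarith
        have hLe : (B - e) / (1 - (A - e)) * (1 - (A - e)) = B - e :=
          div_mul_cancel₀ _ (by linarith)
        generalize (B - e) / (1 - (A - e)) = L at hL hLe
        have hev := aux_decay k hk (fun n => L - s n) (A - e) (by linarith) (by linarith) (by
          filter_upwards [hA.eventually (lt_mem_nhds (show A - e < A by linarith)),
            hB.eventually (lt_mem_nhds (show B - e < B by linarith))] with n h1 h2
          have := mul_le_mul_of_nonneg_right h1.le (hspos n).le
          rw [hrec]
          linarith) ((L - 1) / 2) (by linarith)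
        refine ⟨(1 + L) / 2, by linarith, ?_⟩
        filter_upwards [hev] with n hn
        linarith
    obtain ⟨q, hq1, hev⟩ := key
    obtain ⟨M, hM⟩ := Filter.eventually_atTop.1 hev
    apply aux_int
    have hq : ∀ j : ℕ, q ^ j * x M ≤ x ((j + M : ℕ) : ℤ) := by
      intro j
      induction j with
      | zero => simp
      | succ j ih =>
        have e1 : ((j + 1 + M : ℕ) : ℤ) = ((j + M : ℕ) : ℤ) + 1 := by push_cast; ring
        have h1 := hM (j + M + k) (by omega)
        rw [e1, hsx, pow_succ', mul_assoc]
        exact mul_le_mul h1 ih (mul_nonneg (by positivity) (hpN _).le) (hspos _).le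
    rw [← Filter.tendsto_add_atTop_iff_nat M]
    exact Filter.tendsto_atTop_mono hq
      ((tendsto_pow_atTop_atTop_of_one_lt hq1).atTop_mul_const (hpN M))
end

section
/- Let a be a nonzero real number and let (x_n)_{n ≥ -2} be a real sequence with x_0 ≠ x_{-1} and x_{-2} ≠ x_{-1} satisfying x_{n+1} = x_n + a (x_n - x_{n-1})^2 / (x_{n-1} - x_{n-2}) for all n ≥ 0. Set t_0 := x_0 - x_{-1} and s_0 := (x_0 - x_{-1}) / (x_{-1} - x_{-2}). Then x_n ≠ x_{n-1} for all n ≥ -1 (so all denominators in the recursion are nonzero), and for every n ≥ 0, x_n = x_0 + t_0 ∑_{j=1}^{n} s_0^j a^{j(j+1)/2}. -/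
/-- Example 2: for `x_{n+1} = x_n + a(x_n - x_{n-1})^2/(x_{n-1} - x_{n-2})` with
`a ≠ 0` and initial values satisfying `x_0 ≠ x_{-1}`, `x_{-2} ≠ x_{-1}`, all
denominators stay nonzero and the solution is given explicitly by
`x_n = x_0 + t_0 ∑_{j=1}^n s_0^j a^{j(j+1)/2}` with `t_0 = x_0 - x_{-1}` and
`s_0 = (x_0 - x_{-1})/(x_{-1} - x_{-2})`. -/
theorem stmt_14 (a : ℝ) (ha : a ≠ 0) (x : ℤ → ℝ)
    (h1 : x 0 ≠ x (-1)) (h2 : x (-2) ≠ x (-1))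
    (hx : ∀ n : ℕ, x ((n : ℤ) + 1) =
      x (n : ℤ) + a * (x (n : ℤ) - x ((n : ℤ) - 1)) ^ 2 / (x ((n : ℤ) - 1) - x ((n : ℤ) - 2))) :
    (∀ n : ℤ, -1 ≤ n → x n ≠ x (n - 1)) ∧
    ∀ n : ℕ, x (n : ℤ) = x 0 + (x 0 - x (-1)) *
      ∑ j ∈ Finset.Icc 1 n,
        ((x 0 - x (-1)) / (x (-1) - x (-2))) ^ j * a ^ (j * (j + 1) / 2) := by
  have hd : x (-1) - x (-2) ≠ 0 := sub_ne_zero.mpr h2.symm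
  have ht : x 0 - x (-1) ≠ 0 := sub_ne_zero.mpr h1
  set s := (x 0 - x (-1)) / (x (-1) - x (-2)) with hs
  have hs0 : s ≠ 0 := div_ne_zero ht hd
  have hT : ∀ n : ℕ, (n + 1) * (n + 1 + 1) / 2 = n * (n + 1) / 2 + (n + 1) := by
    intro n
    have : (n + 1) * (n + 1 + 1) = n * (n + 1) + (n + 1) * 2 := by ring
    rw [this, Nat.add_mul_div_right _ _ (by norm_num)]
  have key : ∀ n : ℕ,
      x (n : ℤ) - x ((n : ℤ) - 1) = (x 0 - x (-1)) * (s ^ n * a ^ (n * (n + 1) / 2)) ∧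
      x (n : ℤ) - x ((n : ℤ) - 1) = s * a ^ n * (x ((n : ℤ) - 1) - x ((n : ℤ) - 2)) := by
    intro n
    induction n with
    | zero =>
      refine ⟨by simp, ?_⟩
      simp [hs, div_mul_cancel₀ _ hd]
    | succ n ih =>
      obtain ⟨i1, i2⟩ := ih
      have hne : x (n : ℤ) - x ((n : ℤ) - 1) ≠ 0 := by
        rw [i1]
        exact mul_ne_zero ht (mul_ne_zero (pow_ne_zero _ hs0) (pow_ne_zero _ ha))
      have hne' : x ((n : ℤ) - 1) - x ((n : ℤ) - 2) ≠ 0 := by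
        intro h
        rw [h, mul_zero] at i2
        exact hne i2
      have e1 : ((n + 1 : ℕ) : ℤ) - 1 = n := by push_cast; ring
      have e2 : ((n + 1 : ℕ) : ℤ) - 2 = (n : ℤ) - 1 := by push_cast; ring
      have step : x ((n + 1 : ℕ) : ℤ) - x (n : ℤ)
          = s * a ^ (n + 1) * (x (n : ℤ) - x ((n : ℤ) - 1)) := by
        have h := hx n
        push_cast
        rw [h, add_sub_cancel_left, div_eq_iff hne', pow_two]
        nth_rewrite 1 [i2]
        ring
      rw [e1, e2]
      refine ⟨?_, step⟩
      rw [step, i1, hT, pow_add a (n * (n + 1) / 2)]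
      ring
  refine ⟨?_, ?_⟩
  · intro n hn
    rcases eq_or_lt_of_le hn with h | h
    · subst h
      norm_num
      exact h2.symm
    · obtain ⟨m, rfl⟩ := Int.eq_ofNat_of_zero_le (show 0 ≤ n by omega)
      apply sub_ne_zero.mp
      rw [(key m).1]
      exact mul_ne_zero ht (mul_ne_zero (pow_ne_zero _ hs0) (pow_ne_zero _ ha))
  · intro n
    induction n with
    | zero => simp
    | succ n ih =>
      rw [Finset.sum_Icc_succ_top (by omega), mul_add, ← add_assoc, ← ih, ← (key (n + 1)).1]
      have e1 : ((n + 1 : ℕ) : ℤ) - 1 = n := by push_cast; ring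
      rw [e1]
      ring
end

section
/- Let a be a nonzero real number and let (x_n)_{n ≥ -2} be a real sequence with x_0 ≠ x_{-1} and x_{-2} ≠ x_{-1} satisfying x_{n+1} = x_n + a (x_n - x_{n-1}) / (x_{n-1} - x_{n-2}) for all n ≥ 0. Set t_{-1} := x_{-1} - x_{-2} and t_0 := x_0 - x_{-1}, and let σ := t_{-1} + t_0 + a t_0/t_{-1} + a^2/t_{-1} + a^2/t_0 + a t_{-1}/t_0. Then x_n ≠ x_{n-1} for all n ≥ -1, and for every n ≥ -2, x_{n+6} = x_n + σ. -/
/-- The sum of the six periodic values of the factor equation. -/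
noncomputable def sixSum (a p q : ℝ) : ℝ :=
  p + q + a * q / p + a ^ 2 / p + a ^ 2 / q + a * p / q

theorem sixSum_step (a p q : ℝ) (ha : a ≠ 0) (hp : p ≠ 0) (hq : q ≠ 0) :
    sixSum a q (a * q / p) = sixSum a p q := by
  unfold sixSum
  field_simp
  ring

theorem six_aux (a : ℝ) (ha : a ≠ 0) (t : ℕ → ℝ) (h0 : t 0 ≠ 0) (h1 : t 1 ≠ 0)
    (ht : ∀ k, t (k + 2) = a * t (k + 1) / t k) (k : ℕ) :
    t k ≠ 0 ∧ t (k + 1) ≠ 0 ∧ sixSum a (t k) (t (k + 1)) = sixSum a (t 0) (t 1) ∧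
      t k + t (k + 1) + t (k + 2) + t (k + 3) + t (k + 4) + t (k + 5)
        = sixSum a (t k) (t (k + 1)) := by
  have key : t k ≠ 0 ∧ t (k + 1) ≠ 0 ∧ sixSum a (t k) (t (k + 1)) = sixSum a (t 0) (t 1) := by
    induction k with
    | zero => exact ⟨h0, h1, rfl⟩
    | succ k ih =>
      obtain ⟨hp, hq, hs⟩ := ih
      refine ⟨hq, ?_, ?_⟩
      · rw [ht k]
        exact div_ne_zero (mul_ne_zero ha hq) hp
      · rw [ht k, sixSum_step a _ _ ha hp hq, hs]
  obtain ⟨hp, hq, hs⟩ := key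
  refine ⟨hp, hq, hs, ?_⟩
  have e2 := ht k
  have e3 : t (k + 3) = a ^ 2 / t k := by
    rw [ht (k + 1), e2]; field_simp
  have e4 : t (k + 4) = a ^ 2 / t (k + 1) := by
    rw [ht (k + 2), e3, e2]; field_simp
  have e5 : t (k + 5) = a * t k / t (k + 1) := by
    rw [ht (k + 3), e4, e3]; field_simp
  rw [e2, e3, e4, e5, sixSum]

/-- Example 3: for `x_{n+1} = x_n + a(x_n - x_{n-1})/(x_{n-1} - x_{n-2})` with `a ≠ 0`
and `x_0 ≠ x_{-1}`, `x_{-2} ≠ x_{-1}`, all consecutive differences stay nonzero and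
each solution advances by the constant `σ` (the sum of the six periodic values of the
factor equation) every 6 steps: `x_{n+6} = x_n + σ`. -/
theorem stmt_16 (a : ℝ) (ha : a ≠ 0) (x : ℤ → ℝ)
    (h1 : x 0 ≠ x (-1)) (h2 : x (-2) ≠ x (-1))
    (hx : ∀ n : ℕ, x ((n : ℤ) + 1) =
      x (n : ℤ) + a * (x (n : ℤ) - x ((n : ℤ) - 1)) / (x ((n : ℤ) - 1) - x ((n : ℤ) - 2))) :
    (∀ n : ℤ, -1 ≤ n → x n ≠ x (n - 1)) ∧
    ∀ n : ℤ, -2 ≤ n →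
      x (n + 6) = x n +
        ((x (-1) - x (-2)) + (x 0 - x (-1)) +
          a * (x 0 - x (-1)) / (x (-1) - x (-2)) +
          a ^ 2 / (x (-1) - x (-2)) +
          a ^ 2 / (x 0 - x (-1)) +
          a * (x (-1) - x (-2)) / (x 0 - x (-1))) := by
  have aux := six_aux a ha (fun k : ℕ => x ((k : ℤ) - 1) - x ((k : ℤ) - 2))
    (by simpa using sub_ne_zero.mpr h2.symm)
    (by simpa using sub_ne_zero.mpr h1)
    (by
      intro k
      have h := hx k
      have e1 : (((k + 2 : ℕ) : ℤ) - 1) = k + 1 := by push_cast; ring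
      have e2 : (((k + 2 : ℕ) : ℤ) - 2) = k := by push_cast; ring
      have e3 : (((k + 1 : ℕ) : ℤ) - 1) = k := by push_cast; ring
      have e4 : (((k + 1 : ℕ) : ℤ) - 2) = k - 1 := by push_cast; ring
      simp only [e1, e2, e3, e4]
      rw [h]; ring)
  refine ⟨fun n hn => ?_, fun n hn => ?_⟩
  · obtain ⟨k, hk⟩ := Int.eq_ofNat_of_zero_le (show 0 ≤ n + 1 by omega)
    obtain rfl : n = (k : ℤ) - 1 := by omega
    have h := sub_ne_zero.mp (aux k).1
    rwa [show (k : ℤ) - 1 - 1 = k - 2 by ring]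
  · obtain ⟨k, hk⟩ := Int.eq_ofNat_of_zero_le (show 0 ≤ n + 2 by omega)
    obtain rfl : n = (k : ℤ) - 2 := by omega
    obtain ⟨-, -, hs, ht⟩ := aux k
    rw [hs] at ht
    have f1 : ((k : ℤ) + 1 - 2) = k - 1 := by ring
    have f2 : ((k : ℤ) + 2 - 2) = k + 1 - 1 := by ring
    have f3 : ((k : ℤ) + 3 - 2) = k + 2 - 1 := by ring
    have f4 : ((k : ℤ) + 4 - 2) = k + 3 - 1 := by ring
    have f5 : ((k : ℤ) + 5 - 2) = k + 4 - 1 := by ring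
    have f6 : ((k : ℤ) - 2 + 6) = k + 5 - 1 := by ring
    have g1 : (((0 : ℕ) : ℤ) - 1) = -1 := by norm_num
    have g2 : (((0 : ℕ) : ℤ) - 2) = -2 := by norm_num
    have g3 : (((1 : ℕ) : ℤ) - 1) = 0 := by norm_num
    have g4 : (((1 : ℕ) : ℤ) - 2) = -1 := by norm_num
    simp only [g1, g2, g3, g4, sixSum] at ht
    push_cast at ht
    rw [f1, f2, f3, f4, f5] at ht
    rw [f6]
    linarith
end

section
/- Let a ∈ ℝ and let (x_n)_{n ≥ -1} be a sequence with x_{-1}, x_0 > 0 satisfying x_{n+1} = x_{n-1} e^{a - x_n - x_{n-1}} for all n ≥ 0. Then x_n > 0 for all n, and the sequence r_n := x_n e^{x_{n-1}} / x_{n-1} (defined for n ≥ 0) satisfies the first-order factor equation r_{n+1} = e^a / r_n for all n ≥ 0; consequently r_{n+2} = r_n for all n, so every solution of the factor equation is periodic with period at most 2, and the cofactor equation x_{n+1} = r_{n+1} x_n e^{-x_n} implies that for all n ≥ 0: x_{n+1} = (e^a / r_0) x_n e^{-x_n} when n is even, and x_{n+1} = r_0 x_n e^{-x_n} when n is odd.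 In particular every point (x_n, x_{n+1}) of the orbit lies on the union of the two curves ξ_1(t) = (e^a/r_0) t e^{-t} and ξ_2(t) = r_0 t e^{-t}. -/
/-- Example 4: for `x_{n+1} = x_{n-1} e^{a - x_n - x_{n-1}}` with positive initial
values, the solution stays positive; `r_n = x_n e^{x_{n-1}}/x_{n-1}` satisfies the
factor equation `r_{n+1} = e^a/r_n`, hence is 2-periodic, and the cofactor equation
`x_{n+1} = r_{n+1} x_n e^{-x_n}` shows the orbit alternates between, and hence lies on
the union of, the two curves `ξ₁(t) = (e^a/r_0) t e^{-t}` and `ξ₂(t) = r_0 t e^{-t}`. -/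
theorem stmt_17 (a : ℝ) (x : ℤ → ℝ) (hxm1 : 0 < x (-1)) (hx0 : 0 < x 0)
    (hx : ∀ n : ℕ, x ((n : ℤ) + 1) = x ((n : ℤ) - 1) * Real.exp (a - x (n : ℤ) - x ((n : ℤ) - 1)))
    (r : ℕ → ℝ)
    (hr : ∀ n : ℕ, r n = x (n : ℤ) * Real.exp (x ((n : ℤ) - 1)) / x ((n : ℤ) - 1)) :
    (∀ n : ℤ, -1 ≤ n → 0 < x n) ∧
    (∀ n : ℕ, r (n + 1) = Real.exp a / r n) ∧
    (∀ n : ℕ, r (n + 2) = r n) ∧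
    (∀ n : ℕ, x ((n : ℤ) + 1) = r (n + 1) * x (n : ℤ) * Real.exp (-x (n : ℤ))) ∧
    (∀ n : ℕ, (Even n → x ((n : ℤ) + 1) = (Real.exp a / r 0) * x (n : ℤ) * Real.exp (-x (n : ℤ))) ∧
      (Odd n → x ((n : ℤ) + 1) = r 0 * x (n : ℤ) * Real.exp (-x (n : ℤ)))) ∧
    (∀ n : ℕ, x ((n : ℤ) + 1) = (Real.exp a / r 0) * x (n : ℤ) * Real.exp (-x (n : ℤ)) ∨
      x ((n : ℤ) + 1) = r 0 * x (n : ℤ) * Real.exp (-x (n : ℤ))) := by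
  have hpos2 : ∀ n : ℕ, 0 < x ((n : ℤ) - 1) ∧ 0 < x (n : ℤ) := by
    intro n
    induction n with
    | zero => exact ⟨by simpa using hxm1, by simpa using hx0⟩
    | succ k ih =>
      push_cast
      rw [add_sub_cancel_right]
      refine ⟨ih.2, ?_⟩
      rw [hx k]
      exact mul_pos ih.1 (Real.exp_pos _)
  have hr1 : ∀ n : ℕ, r (n + 1) = x ((n : ℤ) + 1) * Real.exp (x (n : ℤ)) / x (n : ℤ) := by
    intro n
    rw [hr (n + 1)]
    push_cast
    rw [add_sub_cancel_right]
  have hrpos : ∀ n : ℕ, 0 < r n := by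
    intro n
    rw [hr n]
    have h1 := (hpos2 n).1
    have h2 := (hpos2 n).2
    positivity
  have hfac : ∀ n : ℕ, r (n + 1) = Real.exp a / r n := by
    intro n
    have h1 := (hpos2 n).1
    have h2 := (hpos2 n).2
    rw [eq_div_iff (hrpos n).ne', hr1 n, hr n, hx n, Real.exp_sub, Real.exp_sub]
    have e1 := Real.exp_pos (x (n : ℤ))
    have e2 := Real.exp_pos (x ((n : ℤ) - 1))
    field_simp
  have hper : ∀ n : ℕ, r (n + 2) = r n := by
    intro n
    have h := (hrpos n).ne'
    have e := (Real.exp_pos a).ne'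
    rw [hfac (n + 1), hfac n]
    field_simp
  have hcof : ∀ n : ℕ,
      x ((n : ℤ) + 1) = r (n + 1) * x (n : ℤ) * Real.exp (-x (n : ℤ)) := by
    intro n
    have h2 := (hpos2 n).2
    have e1 := Real.exp_pos (x (n : ℤ))
    rw [hr1 n, Real.exp_neg]
    field_simp
  have heven : ∀ k : ℕ, r (2 * k) = r 0 := by
    intro k
    induction k with
    | zero => rfl
    | succ k ih => rw [mul_add, mul_one, hper, ih]
  have hpar : ∀ n : ℕ,
      (Even n → x ((n : ℤ) + 1) = (Real.exp a / r 0) * x (n : ℤ) * Real.exp (-x (n : ℤ))) ∧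
      (Odd n → x ((n : ℤ) + 1) = r 0 * x (n : ℤ) * Real.exp (-x (n : ℤ))) := by
    intro n
    constructor
    · intro h
      obtain ⟨k, hk⟩ := even_iff_two_dvd.mp h
      have h0 : r n = r 0 := by rw [hk, heven]
      rw [hcof n, hfac n, h0]
    · rintro ⟨k, hk⟩
      have h0 : r (n + 1) = r 0 := by
        rw [hk, show 2 * k + 1 + 1 = 2 * (k + 1) by ring, heven]
      rw [hcof n, h0]
  refine ⟨?_, hfac, hper, hcof, hpar, ?_⟩
  · intro n hn
    have h := (hpos2 (n + 1).toNat).1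
    rw [Int.toNat_of_nonneg (by omega), add_sub_cancel_right] at h
    exact h
  · intro n
    rcases Nat.even_or_odd n with h | h
    · exact Or.inl ((hpar n).1 h)
    · exact Or.inr ((hpar n).2 h)
end
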